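/- Fix α ∈ (0, 1/16). For every integer ℓ ≥ 2 satisfying log₂ℓ / log₂log₂ℓ ≥ 1/α, the fraction of matrices K ∈ GL(ℓ,F₂) satisfying λ*_{α,K} ≤ ℓ^{−1/2 + 5α} is at least 1 − 2/ℓ. -/

import Mathlib

/-!
For fixed `u ≠ 0` and uniform `K ∈ GL(ℓ, F₂)`, the vector `u K` is uniform on the nonzero vectors.
Bit `i` is undecodable for the erasure set `S` iff some `u` whose first nonzero entry is at `i` has
`u K` supported on `S`; a union bound gives probability at most `2 ^ (|S| - i)` (`count_undec`).
Dually, bit `i` is decodable iff some `w = e_i + (terms of lower index)` has `K⁻¹ w` supported off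
`S`, which has probability at most `2 ^ (i - |S|)` (`count_dec`).

Let `q i s` be the fraction of the `s`-subsets `S` for which bit `i` is undecodable. Markov's
inequality, applied to the sum over all `i` and `s` of `q i s * 2 ^ (i - s)` and
`(1 - q i s) * 2 ^ (s - i)`, shows that outside a `2 / ℓ` fraction of kernels both bounds hold
simultaneously up to a factor `A = ℓ² (ℓ + 1)` (`Sharp`, `fracGL_sharp`).

Fix such a kernel. The size hypothesis gives `A ≤ 2 ^ √ℓ`, so `q i s ≤ exp (1 + (s - i) / √ℓ)`, and
symmetrically for `1 - q i s`. Since `f_{K,i}(z)` is the binomial average of `q i`, the binomial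
moment generating function at `1 / √ℓ` yields, up to a constant factor,
`f (1 - f) ≤ ℓ z (1 - z) exp (-|i - ℓ z| / √ℓ)`
(`mul_one_sub_le`). The factor `z (1 - z)`, needed near the endpoints, comes from `q i 0 = 0` and
`q i ℓ = 1`. Raising to the power `α` and summing a geometric series over `i` bounds `λ*` by
`8 ℓ ^ (-1/2 + α) / α`, and the hypothesis on `ℓ` says `ℓ ^ α ≥ log₂ ℓ ≥ 1 / α`, which absorbs the
remaining factors (`lamStar_le_of_sharp`).
-/

open scoped Classical

noncomputable section

/-- Bit `i` (0-indexed; it represents the 1-indexed bit `i+1`) is decodable under the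
kernel `K` and the erasure set `S`. -/
def Decodable (ℓ : ℕ) (K : Matrix (Fin ℓ) (Fin ℓ) (ZMod 2)) (i : Fin ℓ)
    (S : Finset (Fin ℓ)) : Prop :=
  ∀ u u' : Fin ℓ → ZMod 2,
    (∀ j : Fin ℓ, j < i → u j = u' j) →
    (∀ j : Fin ℓ, j ∉ S → Matrix.vecMul u K j = Matrix.vecMul u' K j) →
    u i = u' i

/-- The polarization behavior `f_{K,i}(z)` of the kernel `K`. -/
def fK (ℓ : ℕ) (K : Matrix (Fin ℓ) (Fin ℓ) (ZMod 2)) (i : Fin ℓ) (z : ℝ) : ℝ :=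
  ∑ S : Finset (Fin ℓ),
    if ¬ Decodable ℓ K i S then z ^ S.card * (1 - z) ^ (ℓ - S.card) else 0

/-- The polarization process `Z_m(z, b)`. -/
def Zproc (ℓ : ℕ) (K : Matrix (Fin ℓ) (Fin ℓ) (ZMod 2)) (z : ℝ) :
    (m : ℕ) → (Fin m → Fin ℓ) → ℝ
  | 0, _ => z
  | m + 1, b => fK ℓ K (b (Fin.last m)) (Zproc ℓ K z m (fun j => b j.castSucc))

/-- `g_α(z) = z^α (1-z)^α`. -/
def gfun (α z : ℝ) : ℝ := z ^ α * (1 - z) ^ α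

/-- `λ_{α,K}(z)`. -/
def lam (ℓ : ℕ) (K : Matrix (Fin ℓ) (Fin ℓ) (ZMod 2)) (α z : ℝ) : ℝ :=
  ((1 / (ℓ : ℝ)) * ∑ i : Fin ℓ, gfun α (fK ℓ K i z)) / gfun α z

/-- `λ*_{α,K} = sup_{z ∈ (0,1)} λ_{α,K}(z)`. -/
def lamStar (ℓ : ℕ) (K : Matrix (Fin ℓ) (Fin ℓ) (ZMod 2)) (α : ℝ) : ℝ :=
  sSup (lam ℓ K α '' Set.Ioo 0 1)

/-- `E_z[h(Z_m)]`, the uniform average over branch sequences `b`. -/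
def expZ (ℓ : ℕ) (K : Matrix (Fin ℓ) (Fin ℓ) (ZMod 2)) (z : ℝ) (m : ℕ) (h : ℝ → ℝ) : ℝ :=
  (∑ b : Fin m → Fin ℓ, h (Zproc ℓ K z m b)) / (ℓ : ℝ) ^ m


/-- The fraction of matrices `K ∈ GL(ℓ, F₂)` satisfying the property `P`. -/
def fracGL (ℓ : ℕ) (P : Matrix.GeneralLinearGroup (Fin ℓ) (ZMod 2) → Prop) : ℝ :=
  ((Finset.univ.filter P).card : ℝ) /
    (Fintype.card (Matrix.GeneralLinearGroup (Fin ℓ) (ZMod 2)) : ℝ)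

/-! ### Uniformity of `K w` and decodability of a random kernel -/

/-- The general linear group acts transitively on nonzero vectors. -/
lemma exists_GL_mulVec (ℓ : ℕ) (v w : Fin ℓ → ZMod 2) (hv : v ≠ 0) (hw : w ≠ 0) :
    ∃ g : Matrix.GeneralLinearGroup (Fin ℓ) (ZMod 2), (g : Matrix _ _ _).mulVec v = w := by
  let f := (LinearEquiv.toSpanNonzeroSingleton (ZMod 2) _ v hv).symm.trans
    (LinearEquiv.toSpanNonzeroSingleton (ZMod 2) _ w hw)
  obtain ⟨e, he⟩ := Submodule.exists_linearEquiv_restrict_eq f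
  refine ⟨Matrix.GeneralLinearGroup.toLin.symm
    (LinearMap.GeneralLinearGroup.ofLinearEquiv e), ?_⟩
  have h1 : e v = w := by
    have h2 := he ⟨v, Submodule.mem_span_singleton_self v⟩
    have h3 : (LinearEquiv.toSpanNonzeroSingleton (ZMod 2) _ v hv) 1 =
        ⟨v, Submodule.mem_span_singleton_self v⟩ := by
      ext; simp
    simp only at h2
    rw [← h2, ← h3]
    simp only [f, LinearEquiv.trans_apply, LinearEquiv.symm_apply_apply]
    simp
  rw [← h1]
  exact LinearMap.toMatrix'_mulVec (e : (Fin ℓ → ZMod 2) →ₗ[ZMod 2] (Fin ℓ → ZMod 2)) v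

/-- For fixed `w ≠ 0` and uniform `K`, the vector `K w` is uniform on the nonzero vectors. -/
lemma card_fiber (ℓ : ℕ) (v w : Fin ℓ → ZMod 2) (hv : v ≠ 0) (hw : w ≠ 0) :
    (Finset.univ.filter fun K : Matrix.GeneralLinearGroup (Fin ℓ) (ZMod 2) =>
      (K : Matrix _ _ _).mulVec w = v).card * (2 ^ ℓ - 1) =
    Fintype.card (Matrix.GeneralLinearGroup (Fin ℓ) (ZMod 2)) := by
  have key : ∀ v' ∈ (Finset.univ.erase (0 : Fin ℓ → ZMod 2)),
      (Finset.univ.filter fun K : Matrix.GeneralLinearGroup (Fin ℓ) (ZMod 2) =>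
        (K : Matrix _ _ _).mulVec w = v').card =
      (Finset.univ.filter fun K : Matrix.GeneralLinearGroup (Fin ℓ) (ZMod 2) =>
        (K : Matrix _ _ _).mulVec w = v).card := by
    intro v' hv'
    obtain ⟨g, hg⟩ := exists_GL_mulVec ℓ v' v (Finset.ne_of_mem_erase hv') hv
    have hinj : Function.Injective (g : Matrix (Fin ℓ) (Fin ℓ) (ZMod 2)).mulVec :=
      Matrix.mulVec_injective_of_isUnit g.isUnit
    refine Finset.card_equiv (Equiv.mulLeft g) fun K => ?_
    simp only [Finset.mem_filter, Finset.mem_univ, true_and, Equiv.coe_mulLeft, Units.val_mul,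
      ← Matrix.mulVec_mulVec]
    rw [← hg]
    exact hinj.eq_iff.symm
  have h := Finset.card_eq_sum_card_fiberwise
    (s := (Finset.univ : Finset (Matrix.GeneralLinearGroup (Fin ℓ) (ZMod 2))))
    (t := Finset.univ.erase (0 : Fin ℓ → ZMod 2))
    (f := fun K : Matrix.GeneralLinearGroup (Fin ℓ) (ZMod 2) => (K : Matrix _ _ _).mulVec w) (by
      intro K _
      simp only [Finset.coe_erase, Finset.coe_univ, Set.mem_sdiff, Set.mem_univ, true_and,
        Set.mem_singleton_iff]
      intro h0
      exact hw (Matrix.mulVec_injective_of_isUnit K.isUnit (by simpa using h0)))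
  rw [Finset.sum_congr rfl key, Finset.sum_const, Finset.card_univ,
    Finset.card_erase_of_mem (Finset.mem_univ _)] at h
  rw [h]
  simp [ZMod.card, mul_comm]

lemma card_supported (ℓ : ℕ) (S : Finset (Fin ℓ)) :
    (Finset.univ.filter fun v : Fin ℓ → ZMod 2 => ∀ j, j ∉ S → v j = 0).card = 2 ^ S.card := by
  have : (Finset.univ.filter fun v : Fin ℓ → ZMod 2 => ∀ j, j ∉ S → v j = 0) =
      Fintype.piFinset fun j => if j ∈ S then Finset.univ else {0} := by
    ext v
    simp only [Finset.mem_filter, Finset.mem_univ, true_and, Fintype.mem_piFinset]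
    refine forall_congr' fun j => ?_
    by_cases h : j ∈ S <;> simp [h]
  rw [this, Fintype.card_piFinset]
  simp only [apply_ite Finset.card, Finset.card_univ, ZMod.card, Finset.card_singleton]
  rw [Finset.prod_ite]
  simp

/-- For `w ≠ 0`, the probability that `K w` is supported on `S` is at most `2 ^ (|S| - ℓ)`. -/
lemma count_supported (ℓ : ℕ) (w : Fin ℓ → ZMod 2) (hw : w ≠ 0) (S : Finset (Fin ℓ)) :
    (Finset.univ.filter fun K : Matrix.GeneralLinearGroup (Fin ℓ) (ZMod 2) =>
      ∀ j, j ∉ S → (K : Matrix _ _ _).mulVec w j = 0).card * 2 ^ ℓ ≤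
    2 ^ S.card * Fintype.card (Matrix.GeneralLinearGroup (Fin ℓ) (ZMod 2)) := by
  set G := Fintype.card (Matrix.GeneralLinearGroup (Fin ℓ) (ZMod 2)) with hG
  set V := (Finset.univ.filter fun v : Fin ℓ → ZMod 2 => ∀ j, j ∉ S → v j = 0) with hV
  have hVc : V.card = 2 ^ S.card := card_supported ℓ S
  have h := Finset.card_eq_sum_card_fiberwise
    (s := Finset.univ.filter fun K : Matrix.GeneralLinearGroup (Fin ℓ) (ZMod 2) =>
      ∀ j, j ∉ S → (K : Matrix _ _ _).mulVec w j = 0)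
    (t := V.erase 0)
    (f := fun K : Matrix.GeneralLinearGroup (Fin ℓ) (ZMod 2) => (K : Matrix _ _ _).mulVec w) (by
      intro K hK
      simp only [Finset.coe_filter, Finset.mem_univ, true_and, Set.mem_ofPred_eq] at hK
      simp only [Finset.mem_coe, Finset.mem_erase, hV, Finset.mem_filter, Finset.mem_univ,
        true_and]
      refine ⟨fun h0 => hw (Matrix.mulVec_injective_of_isUnit K.isUnit (by simpa using h0)), hK⟩)
  have h0 : (0 : Fin ℓ → ZMod 2) ∈ V := by simp [hV]
  have hle : (Finset.univ.filter fun K : Matrix.GeneralLinearGroup (Fin ℓ) (ZMod 2) =>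
      ∀ j, j ∉ S → (K : Matrix _ _ _).mulVec w j = 0).card * (2 ^ ℓ - 1) ≤
      (2 ^ S.card - 1) * G := by
    rw [h, Finset.sum_mul]
    calc _ ≤ ∑ v ∈ V.erase 0, G := by
          refine Finset.sum_le_sum fun v hv => ?_
          rw [hG, ← card_fiber ℓ v w (Finset.ne_of_mem_erase hv) hw]
          gcongr
          simp
      _ = _ := by
          rw [Finset.sum_const, Finset.card_erase_of_mem h0, hVc, smul_eq_mul]
  have hs : 2 ^ S.card ≤ 2 ^ ℓ :=
    Nat.pow_le_pow_right (by norm_num) ((Finset.card_le_univ S).trans (by simp))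
  have hN : (Finset.univ.filter fun K : Matrix.GeneralLinearGroup (Fin ℓ) (ZMod 2) =>
      ∀ j, j ∉ S → (K : Matrix _ _ _).mulVec w j = 0).card ≤ G := by
    rw [hG]; exact Finset.card_le_univ _
  generalize (Finset.univ.filter fun K : Matrix.GeneralLinearGroup (Fin ℓ) (ZMod 2) =>
      ∀ j, j ∉ S → (K : Matrix _ _ _).mulVec w j = 0).card = N at *
  obtain ⟨a, ha⟩ : ∃ a, 2 ^ S.card = a + 1 :=
    ⟨2 ^ S.card - 1, (Nat.sub_add_cancel Nat.one_le_two_pow).symm⟩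
  obtain ⟨b, hb⟩ : ∃ b, 2 ^ ℓ = b + 1 :=
    ⟨2 ^ ℓ - 1, (Nat.sub_add_cancel Nat.one_le_two_pow).symm⟩
  rw [ha, hb] at hle hs ⊢
  simp only [Nat.add_sub_cancel] at hle
  nlinarith

/-- Transposition as a permutation of the general linear group. -/
def transposeGL (ℓ : ℕ) : Matrix.GeneralLinearGroup (Fin ℓ) (ZMod 2) ≃
    Matrix.GeneralLinearGroup (Fin ℓ) (ZMod 2) where
  toFun K := ⟨(K : Matrix _ _ _).transpose, ((K⁻¹ : _) : Matrix _ _ _).transpose,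
    by rw [← Matrix.transpose_mul]; simp [-Matrix.coe_units_inv],
    by rw [← Matrix.transpose_mul]; simp [-Matrix.coe_units_inv]⟩
  invFun K := ⟨(K : Matrix _ _ _).transpose, ((K⁻¹ : _) : Matrix _ _ _).transpose,
    by rw [← Matrix.transpose_mul]; simp [-Matrix.coe_units_inv],
    by rw [← Matrix.transpose_mul]; simp [-Matrix.coe_units_inv]⟩
  left_inv K := by ext; simp
  right_inv K := by ext; simp

lemma count_vecMul (ℓ : ℕ) (w : Fin ℓ → ZMod 2) (hw : w ≠ 0) (S : Finset (Fin ℓ)) :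
    (Finset.univ.filter fun K : Matrix.GeneralLinearGroup (Fin ℓ) (ZMod 2) =>
      ∀ j, j ∉ S → Matrix.vecMul w (K : Matrix _ _ _) j = 0).card * 2 ^ ℓ ≤
    2 ^ S.card * Fintype.card (Matrix.GeneralLinearGroup (Fin ℓ) (ZMod 2)) := by
  rw [Finset.card_equiv (transposeGL ℓ) (t := Finset.univ.filter
    fun K : Matrix.GeneralLinearGroup (Fin ℓ) (ZMod 2) =>
      ∀ j, j ∉ S → (K : Matrix _ _ _).mulVec w j = 0)]
  · exact count_supported ℓ w hw S
  · intro K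
    simp [transposeGL, Matrix.mulVec_transpose]

lemma count_inv_mulVec (ℓ : ℕ) (w : Fin ℓ → ZMod 2) (hw : w ≠ 0) (S : Finset (Fin ℓ)) :
    (Finset.univ.filter fun K : Matrix.GeneralLinearGroup (Fin ℓ) (ZMod 2) =>
      ∀ j, j ∉ S → ((K⁻¹ : Matrix.GeneralLinearGroup (Fin ℓ) (ZMod 2)) :
        Matrix _ _ _).mulVec w j = 0).card * 2 ^ ℓ ≤
    2 ^ S.card * Fintype.card (Matrix.GeneralLinearGroup (Fin ℓ) (ZMod 2)) := by
  refine le_trans (Nat.mul_le_mul_right _ (le_of_eq ?_)) (count_supported ℓ w hw S)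
  refine Finset.card_equiv (Equiv.inv _) fun K => ?_
  rw [Finset.mem_filter, Finset.mem_filter, Equiv.inv_apply]
  simp only [Finset.mem_univ, true_and]

/-- If bit `i` is undecodable, some codeword `u K` with first nonzero entry of `u` at `i` is
supported on the erased set. -/
lemma exists_of_not_decodable (ℓ : ℕ) (K : Matrix (Fin ℓ) (Fin ℓ) (ZMod 2)) (i : Fin ℓ)
    (S : Finset (Fin ℓ)) (h : ¬ Decodable ℓ K i S) :
    ∃ u : Fin ℓ → ZMod 2, (∀ j, j < i → u j = 0) ∧ u i ≠ 0 ∧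
      ∀ j, j ∉ S → Matrix.vecMul u K j = 0 := by
  unfold Decodable at h
  push Not at h
  obtain ⟨u, u', h1, h2, h3⟩ := h
  refine ⟨u - u', fun j hj => by simp [h1 j hj], by simpa [sub_eq_zero] using h3, fun j hj => ?_⟩
  rw [Matrix.sub_vecMul, Pi.sub_apply, h2 j hj, sub_self]

/-- The dual description of decodability: the functional `u ↦ u i` is a combination of the known
coordinates `u j`, `j < i`, and of the unerased coordinates of `u K`. -/
lemma exists_of_decodable (ℓ : ℕ) (K : Matrix (Fin ℓ) (Fin ℓ) (ZMod 2)) (i : Fin ℓ)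
    (S : Finset (Fin ℓ)) (h : Decodable ℓ K i S) :
    ∃ c d : Fin ℓ → ZMod 2, (∀ j, j ∉ Finset.Iio i → c j = 0) ∧ (∀ j, j ∈ S → d j = 0) ∧
      Pi.single i 1 + c = K.mulVec d := by
  let L : {j // j < i} ⊕ {j // j ∉ S} → ((Fin ℓ → ZMod 2) →ₗ[ZMod 2] ZMod 2) :=
    Sum.elim (fun j => LinearMap.proj j.1)
      (fun j => (LinearMap.proj j.1).comp (Matrix.vecMulLinear K))
  have hspan : (LinearMap.proj i : (Fin ℓ → ZMod 2) →ₗ[ZMod 2] ZMod 2) ∈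
      Submodule.span (ZMod 2) (Set.range L) := by
    apply mem_span_of_iInf_ker_le_ker
    intro u hu
    simp only [Submodule.mem_iInf, LinearMap.mem_ker, Sum.forall, L, Sum.elim_inl, Sum.elim_inr,
      LinearMap.comp_apply, LinearMap.proj_apply, Matrix.vecMulLinear_apply, Subtype.forall] at hu
    have := h u 0 (fun j hj => by simpa using hu.1 j hj) (fun j hj => by simpa using hu.2 j hj)
    simpa using this
  obtain ⟨a, ha⟩ := (Submodule.mem_span_range_iff_exists_fun (ZMod 2)).1 hspan
  refine ⟨fun j => if hj : j < i then - a (Sum.inl ⟨j, hj⟩) else 0,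
    fun j => if hj : j ∉ S then a (Sum.inr ⟨j, hj⟩) else 0, ?_, ?_, ?_⟩
  · intro j hj
    simp only [Finset.mem_Iio] at hj
    simp [hj]
  · intro j hj; simp [hj]
  · ext k
    have hk := LinearMap.congr_fun ha (Pi.single k 1)
    rw [Fintype.sum_sum_type] at hk
    simp only [L, Sum.elim_inl, Sum.elim_inr, LinearMap.add_apply, LinearMap.sum_apply,
      LinearMap.smul_apply, LinearMap.comp_apply, LinearMap.proj_apply,
      Matrix.vecMulLinear_apply, Matrix.single_one_vecMul, smul_eq_mul] at hk
    have e1 : ∑ x : {j // j < i}, a (Sum.inl x) * (Pi.single k (1 : ZMod 2) : Fin ℓ → ZMod 2) x =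
        if hj : k < i then a (Sum.inl ⟨k, hj⟩) else 0 := by
      split_ifs with hj
      · rw [Finset.sum_eq_single ⟨k, hj⟩]
        · simp
        · intro b _ hb
          rw [Pi.single_eq_of_ne, mul_zero]
          exact fun h => hb (Subtype.ext h)
        · simp
      · refine Finset.sum_eq_zero fun b _ => ?_
        rw [Pi.single_eq_of_ne, mul_zero]
        rintro rfl
        exact hj b.2
    have e2 : ∑ x : {j // j ∉ S}, a (Sum.inr x) * K.row k x =
        ∑ j, K k j * (if hj : j ∉ S then a (Sum.inr ⟨j, hj⟩) else 0) := by
      have := Finset.sum_subtype (F := Subtype.fintype _) (Finset.univ.filter fun j => j ∉ S)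
        (p := fun j => j ∉ S) (by simp) (fun j => K k j * (if hj : j ∉ S then a (Sum.inr ⟨j, hj⟩) else 0))
      rw [Finset.sum_filter] at this
      rw [Finset.sum_congr rfl (g := fun j => if j ∉ S then
        K k j * (if hj : j ∉ S then a (Sum.inr ⟨j, hj⟩) else 0) else 0), this]
      · refine Finset.sum_congr rfl fun j _ => ?_
        simp [j.2, mul_comm, Matrix.row]
      · intro j _
        by_cases hj : j ∈ S <;> simp [hj]
    rw [e1, e2] at hk
    simp only [Pi.add_apply, Matrix.mulVec, dotProduct]
    have e3 : (Pi.single i (1 : ZMod 2) : Fin ℓ → ZMod 2) k =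
        (Pi.single k 1 : Fin ℓ → ZMod 2) i := by
      simp [Pi.single_apply, eq_comm]
    rw [e3, ← hk]
    by_cases hj : k < i
    · rw [dif_pos hj, dif_pos hj]; ring
    · rw [dif_neg hj, dif_neg hj]; ring

/-- A uniformly random kernel leaves bit `i` undecodable with probability at most
`2 ^ (|S| - i)`. -/
lemma count_undec (ℓ : ℕ) (i : Fin ℓ) (S : Finset (Fin ℓ)) :
    (Finset.univ.filter fun K : Matrix.GeneralLinearGroup (Fin ℓ) (ZMod 2) =>
      ¬ Decodable ℓ (K : Matrix _ _ _) i S).card * 2 ^ (i : ℕ) ≤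
    2 ^ S.card * Fintype.card (Matrix.GeneralLinearGroup (Fin ℓ) (ZMod 2)) := by
  set G := Fintype.card (Matrix.GeneralLinearGroup (Fin ℓ) (ZMod 2)) with hG
  set U := Finset.univ.filter fun u : Fin ℓ → ZMod 2 =>
    (∀ j, j < i → u j = 0) ∧ u i ≠ 0 with hU
  have hUc : U.card * 2 ^ (i : ℕ) ≤ 2 ^ ℓ := by
    have h1 : U.card ≤ 2 ^ (Finset.Ici i).card := by
      rw [← card_supported]
      refine Finset.card_le_card fun u hu => ?_
      simp only [hU, Finset.mem_filter, Finset.mem_univ, true_and] at hu ⊢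
      intro j hj
      exact hu.1 j (by simpa using hj)
    rw [Fin.card_Ici] at h1
    calc _ ≤ 2 ^ (ℓ - (i : ℕ)) * 2 ^ (i : ℕ) := by gcongr
      _ = 2 ^ ℓ := by rw [← pow_add, Nat.sub_add_cancel i.2.le]
  have hsub : (Finset.univ.filter fun K : Matrix.GeneralLinearGroup (Fin ℓ) (ZMod 2) =>
      ¬ Decodable ℓ (K : Matrix _ _ _) i S) ⊆ U.biUnion fun u => Finset.univ.filter
        fun K : Matrix.GeneralLinearGroup (Fin ℓ) (ZMod 2) =>
      ∀ j, j ∉ S → Matrix.vecMul u (K : Matrix _ _ _) j = 0 := by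
    intro K hK
    simp only [Finset.mem_filter, Finset.mem_univ, true_and, Finset.mem_biUnion, hU] at hK ⊢
    obtain ⟨u, h1, h2, h3⟩ := exists_of_not_decodable ℓ _ i S hK
    exact ⟨u, ⟨h1, h2⟩, h3⟩
  have hcard := (Finset.card_le_card hsub).trans Finset.card_biUnion_le
  have hmul : (Finset.univ.filter fun K : Matrix.GeneralLinearGroup (Fin ℓ) (ZMod 2) =>
      ¬ Decodable ℓ (K : Matrix _ _ _) i S).card * 2 ^ ℓ ≤ U.card * (2 ^ S.card * G) := by
    refine (Nat.mul_le_mul_right _ hcard).trans ?_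
    rw [Finset.sum_mul, ← smul_eq_mul, ← Finset.sum_const]
    refine Finset.sum_le_sum fun u hu => count_vecMul ℓ u ?_ S
    rintro rfl
    simp [hU] at hu
  generalize (Finset.univ.filter fun K : Matrix.GeneralLinearGroup (Fin ℓ) (ZMod 2) =>
      ¬ Decodable ℓ (K : Matrix _ _ _) i S).card = N at *
  refine Nat.le_of_mul_le_mul_right (c := 2 ^ ℓ) ?_ (by positivity)
  calc N * 2 ^ (i : ℕ) * 2 ^ ℓ = N * 2 ^ ℓ * 2 ^ (i : ℕ) := by ring
    _ ≤ U.card * (2 ^ S.card * G) * 2 ^ (i : ℕ) := Nat.mul_le_mul_right _ hmul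
    _ = U.card * 2 ^ (i : ℕ) * (2 ^ S.card * G) := by ring
    _ ≤ 2 ^ ℓ * (2 ^ S.card * G) := Nat.mul_le_mul_right _ hUc
    _ = _ := by ring

/-- A uniformly random kernel makes bit `i` decodable with probability at most
`2 ^ (i - |S|)`. -/
lemma count_dec (ℓ : ℕ) (i : Fin ℓ) (S : Finset (Fin ℓ)) :
    (Finset.univ.filter fun K : Matrix.GeneralLinearGroup (Fin ℓ) (ZMod 2) =>
      Decodable ℓ (K : Matrix _ _ _) i S).card * 2 ^ S.card ≤
    2 ^ (i : ℕ) * Fintype.card (Matrix.GeneralLinearGroup (Fin ℓ) (ZMod 2)) := by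
  set G := Fintype.card (Matrix.GeneralLinearGroup (Fin ℓ) (ZMod 2)) with hG
  set U := (Finset.univ.filter fun c : Fin ℓ → ZMod 2 => ∀ j, j ∉ Finset.Iio i → c j = 0).image
    (fun c => Pi.single i (1 : ZMod 2) + c) with hU
  have hUc : U.card ≤ 2 ^ (i : ℕ) := by
    refine Finset.card_image_le.trans ?_
    rw [card_supported, Fin.card_Iio]
  have hsub : (Finset.univ.filter fun K : Matrix.GeneralLinearGroup (Fin ℓ) (ZMod 2) =>
      Decodable ℓ (K : Matrix _ _ _) i S) ⊆ U.biUnion fun u => Finset.univ.filter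
        fun K : Matrix.GeneralLinearGroup (Fin ℓ) (ZMod 2) =>
      ∀ j, j ∉ Sᶜ → ((K⁻¹ : Matrix.GeneralLinearGroup (Fin ℓ) (ZMod 2)) :
        Matrix _ _ _).mulVec u j = 0 := by
    intro K hK
    simp only [Finset.mem_filter, Finset.mem_univ, true_and, Finset.mem_biUnion] at hK ⊢
    obtain ⟨c, d, h1, h2, h3⟩ := exists_of_decodable ℓ _ i S hK
    refine ⟨Pi.single i 1 + c, Finset.mem_image.2 ⟨c, by simpa using h1, rfl⟩, fun j hj => ?_⟩
    rw [h3, Matrix.mulVec_mulVec, ← Units.val_mul, inv_mul_cancel, Units.val_one,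
      Matrix.one_mulVec]
    exact h2 j (by simpa using hj)
  have hcard := (Finset.card_le_card hsub).trans Finset.card_biUnion_le
  have hmul : (Finset.univ.filter fun K : Matrix.GeneralLinearGroup (Fin ℓ) (ZMod 2) =>
      Decodable ℓ (K : Matrix _ _ _) i S).card * 2 ^ ℓ ≤ U.card * (2 ^ Sᶜ.card * G) := by
    refine (Nat.mul_le_mul_right _ hcard).trans ?_
    rw [Finset.sum_mul, ← smul_eq_mul, ← Finset.sum_const]
    refine Finset.sum_le_sum fun u hu => count_inv_mulVec ℓ u ?_ Sᶜ
    rintro rfl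
    obtain ⟨c, hc, h0⟩ := Finset.mem_image.1 hu
    have h4 := congr_fun h0 i
    simp only [Finset.mem_filter, Finset.mem_univ, true_and] at hc
    simp [hc i (by simp)] at h4
  have hs : 2 ^ Sᶜ.card * 2 ^ S.card = 2 ^ ℓ := by
    rw [← pow_add, Finset.card_compl_add_card, Fintype.card_fin]
  generalize (Finset.univ.filter fun K : Matrix.GeneralLinearGroup (Fin ℓ) (ZMod 2) =>
      Decodable ℓ (K : Matrix _ _ _) i S).card = N at *
  refine Nat.le_of_mul_le_mul_right (c := 2 ^ ℓ) ?_ (by positivity)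
  calc N * 2 ^ S.card * 2 ^ ℓ = N * 2 ^ ℓ * 2 ^ S.card := by ring
    _ ≤ U.card * (2 ^ Sᶜ.card * G) * 2 ^ S.card := Nat.mul_le_mul_right _ hmul
    _ = U.card * G * (2 ^ Sᶜ.card * 2 ^ S.card) := by ring
    _ ≤ 2 ^ (i : ℕ) * G * (2 ^ Sᶜ.card * 2 ^ S.card) := by gcongr
    _ = _ := by rw [hs]

/-! ### Erasure profiles of random kernels -/

/-- The number of erasure sets of size `s` under which bit `i` is undecodable. -/
def undecCount (ℓ : ℕ) (K : Matrix (Fin ℓ) (Fin ℓ) (ZMod 2)) (i : Fin ℓ) (s : ℕ) : ℕ :=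
  ((Finset.powersetCard s Finset.univ).filter fun S => ¬ Decodable ℓ K i S).card

lemma fK_eq (ℓ : ℕ) (K : Matrix (Fin ℓ) (Fin ℓ) (ZMod 2)) (i : Fin ℓ) (z : ℝ) :
    fK ℓ K i z = ∑ s ∈ Finset.range (ℓ + 1),
      (undecCount ℓ K i s : ℝ) * (z ^ s * (1 - z) ^ (ℓ - s)) := by
  unfold fK
  rw [← Finset.sum_fiberwise_of_maps_to (s := Finset.univ) (t := Finset.range (ℓ + 1))
    (g := Finset.card) (fun S _ => by
      simpa [Nat.lt_succ_iff] using Finset.card_le_univ S)]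
  refine Finset.sum_congr rfl fun s _ => ?_
  have : (Finset.univ.filter fun S : Finset (Fin ℓ) => S.card = s) =
      Finset.powersetCard s Finset.univ := by
    ext S; simp [Finset.mem_powersetCard]
  rw [this, ← Finset.sum_filter, undecCount, ← nsmul_eq_mul, ← Finset.sum_const]
  refine Finset.sum_congr rfl fun S hS => ?_
  rw [(Finset.mem_powersetCard.1 (Finset.mem_filter.1 hS).1).2]

lemma undecCount_le (ℓ : ℕ) (K : Matrix (Fin ℓ) (Fin ℓ) (ZMod 2)) (i : Fin ℓ) (s : ℕ) :
    undecCount ℓ K i s ≤ ℓ.choose s := by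
  unfold undecCount
  refine (Finset.card_filter_le _ _).trans ?_
  simp [Finset.card_powersetCard]

/-- Without erasures, every bit is decodable under an invertible kernel. -/
lemma undecCount_zero (ℓ : ℕ) (K : Matrix.GeneralLinearGroup (Fin ℓ) (ZMod 2)) (i : Fin ℓ) :
    undecCount ℓ K i 0 = 0 := by
  unfold undecCount
  rw [Finset.powersetCard_zero, Finset.card_eq_zero, Finset.filter_eq_empty_iff]
  intro S hS
  rw [Finset.mem_singleton.1 hS, not_not]
  intro u u' _ h
  have : u = u' := Matrix.vecMul_injective_of_isUnit K.isUnit (funext fun j => h j (by simp))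
  rw [this]

/-- If everything is erased, no bit is decodable. -/
lemma undecCount_self (ℓ : ℕ) (K : Matrix (Fin ℓ) (Fin ℓ) (ZMod 2)) (i : Fin ℓ) :
    undecCount ℓ K i ℓ = 1 := by
  unfold undecCount
  have h : Finset.powersetCard ℓ (Finset.univ : Finset (Fin ℓ)) = {Finset.univ} := by
    have := Finset.powersetCard_self (Finset.univ : Finset (Fin ℓ))
    rwa [Finset.card_fin] at this
  rw [h, Finset.filter_true_of_mem, Finset.card_singleton]
  intro S hS hd
  rw [Finset.mem_singleton.1 hS] at hd
  have := hd (Pi.single i 1) 0 (fun j hj => by simp [hj.ne]) (fun j hj => by simp at hj)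
  simp at this

lemma sum_undecCount (ℓ : ℕ) (i : Fin ℓ) (s : ℕ) :
    (∑ K : Matrix.GeneralLinearGroup (Fin ℓ) (ZMod 2), (undecCount ℓ K i s : ℝ)) * 2 ^ (i : ℕ) ≤
      ℓ.choose s * 2 ^ s * Fintype.card (Matrix.GeneralLinearGroup (Fin ℓ) (ZMod 2)) := by
  have h : (∑ K : Matrix.GeneralLinearGroup (Fin ℓ) (ZMod 2), undecCount ℓ K i s) * 2 ^ (i : ℕ) ≤
      ℓ.choose s * (2 ^ s * Fintype.card (Matrix.GeneralLinearGroup (Fin ℓ) (ZMod 2))) := by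
    unfold undecCount
    simp_rw [Finset.card_filter]
    rw [Finset.sum_comm, Finset.sum_mul]
    have hc : ℓ.choose s = (Finset.powersetCard s (Finset.univ : Finset (Fin ℓ))).card := by simp
    rw [hc, ← smul_eq_mul, ← Finset.sum_const]
    refine Finset.sum_le_sum fun S hS => ?_
    rw [← Finset.card_filter]
    have := count_undec ℓ i S
    rwa [(Finset.mem_powersetCard.1 hS).2] at this
  rw [mul_assoc]
  exact_mod_cast h

lemma sum_decCount (ℓ : ℕ) (i : Fin ℓ) (s : ℕ) :
    (∑ K : Matrix.GeneralLinearGroup (Fin ℓ) (ZMod 2),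
        ((ℓ.choose s : ℝ) - undecCount ℓ K i s)) * 2 ^ s ≤
      ℓ.choose s * 2 ^ (i : ℕ) * Fintype.card (Matrix.GeneralLinearGroup (Fin ℓ) (ZMod 2)) := by
  have h0 : ∀ K : Matrix.GeneralLinearGroup (Fin ℓ) (ZMod 2),
      (ℓ.choose s : ℝ) - undecCount ℓ K i s =
      (((Finset.powersetCard s Finset.univ).filter
        fun S => Decodable ℓ (K : Matrix _ _ _) i S).card : ℝ) := by
    intro K
    have := Finset.card_filter_add_card_filter_not (s := Finset.powersetCard s Finset.univ)
      (fun S => Decodable ℓ (K : Matrix _ _ _) i S)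
    rw [Finset.card_powersetCard, Finset.card_fin] at this
    rw [← this, undecCount]
    push_cast
    ring
  have h : (∑ K : Matrix.GeneralLinearGroup (Fin ℓ) (ZMod 2),
      ((Finset.powersetCard s Finset.univ).filter
        fun S => Decodable ℓ (K : Matrix _ _ _) i S).card) * 2 ^ s ≤
      ℓ.choose s * (2 ^ (i : ℕ) *
        Fintype.card (Matrix.GeneralLinearGroup (Fin ℓ) (ZMod 2))) := by
    simp_rw [Finset.card_filter]
    rw [Finset.sum_comm, Finset.sum_mul]
    have hc : ℓ.choose s = (Finset.powersetCard s (Finset.univ : Finset (Fin ℓ))).card := by simp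
    rw [hc, ← smul_eq_mul, ← Finset.sum_const]
    refine Finset.sum_le_sum fun S hS => ?_
    rw [← Finset.card_filter]
    have := count_dec ℓ i S
    rwa [(Finset.mem_powersetCard.1 hS).2] at this
  simp_rw [h0]
  rw [mul_assoc]
  exact_mod_cast h

/-- The kernels whose undecodability profile is, up to the factor `A`, as sharp as that of the
average kernel: at most a fraction `A * 2 ^ (s - i)` of the erasure sets of size `s` leaves bit `i`
undecodable, and at most a fraction `A * 2 ^ (i - s)` makes it decodable. -/
def Sharp (ℓ : ℕ) (A : ℝ) (K : Matrix.GeneralLinearGroup (Fin ℓ) (ZMod 2)) : Prop :=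
  ∀ i : Fin ℓ, ∀ s ≤ ℓ,
    (undecCount ℓ K i s : ℝ) * 2 ^ (i : ℕ) ≤ A * (ℓ.choose s * 2 ^ s) ∧
    ((ℓ.choose s : ℝ) - undecCount ℓ K i s) * 2 ^ s ≤ A * (ℓ.choose s * 2 ^ (i : ℕ))

/-- Markov's inequality for the sum over `i` and `s` of the two normalized profiles, whose mean is
at most `2ℓ(ℓ+1)`. -/
lemma fracGL_sharp (ℓ : ℕ) (hℓ : 2 ≤ ℓ)
    (P : Matrix.GeneralLinearGroup (Fin ℓ) (ZMod 2) → Prop)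
    (hP : ∀ K, Sharp ℓ ((ℓ : ℝ) ^ 2 * (ℓ + 1)) K → P K) :
    fracGL ℓ P ≥ 1 - 2 / (ℓ : ℝ) := by
  set G := Fintype.card (Matrix.GeneralLinearGroup (Fin ℓ) (ZMod 2)) with hG
  have hGpos : (0 : ℝ) < G := by exact_mod_cast Fintype.card_pos
  have hℓ0 : (0 : ℝ) < ℓ := by exact_mod_cast (by omega : 0 < ℓ)
  set A : ℝ := (ℓ : ℝ) ^ 2 * (ℓ + 1) with hA
  have hA0 : 0 < A := by positivity
  let a : Matrix.GeneralLinearGroup (Fin ℓ) (ZMod 2) → Fin ℓ → ℕ → ℝ := fun K i s =>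
    (undecCount ℓ K i s : ℝ) * 2 ^ (i : ℕ) / (ℓ.choose s * 2 ^ s)
  let b : Matrix.GeneralLinearGroup (Fin ℓ) (ZMod 2) → Fin ℓ → ℕ → ℝ := fun K i s =>
    ((ℓ.choose s : ℝ) - undecCount ℓ K i s) * 2 ^ s / (ℓ.choose s * 2 ^ (i : ℕ))
  have ha0 : ∀ K i s, 0 ≤ a K i s := fun K i s => by positivity
  have hb0 : ∀ K i s, 0 ≤ b K i s := fun K i s => by
    have : (undecCount ℓ K i s : ℝ) ≤ ℓ.choose s := by exact_mod_cast undecCount_le ℓ _ i s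
    have := sub_nonneg.2 this
    positivity
  have hC : ∀ s ≤ ℓ, (0 : ℝ) < ℓ.choose s := fun s hs => by exact_mod_cast Nat.choose_pos hs
  let T : Matrix.GeneralLinearGroup (Fin ℓ) (ZMod 2) → ℝ := fun K =>
    ∑ i : Fin ℓ, ∑ s ∈ Finset.range (ℓ + 1), (a K i s + b K i s)
  have hT0 : ∀ K, 0 ≤ T K := fun K => Finset.sum_nonneg fun i _ => Finset.sum_nonneg fun s _ =>
    add_nonneg (ha0 K i s) (hb0 K i s)
  have hsharp : ∀ K, T K ≤ A → Sharp ℓ A K := by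
    intro K hK i s hs
    have h1 : a K i s + b K i s ≤ T K := by
      refine le_trans ?_ (Finset.single_le_sum (f := fun i => ∑ s ∈ Finset.range (ℓ + 1),
        (a K i s + b K i s)) (fun i _ => Finset.sum_nonneg fun s _ =>
          add_nonneg (ha0 K i s) (hb0 K i s)) (Finset.mem_univ i))
      exact Finset.single_le_sum (f := fun s => a K i s + b K i s) (fun s _ =>
        add_nonneg (ha0 K i s) (hb0 K i s)) (Finset.mem_range.2 (by omega))
    have h2 := ha0 K i s
    have h3 := hb0 K i s
    have hc := hC s hs
    constructor
    · rw [← div_le_iff₀ (by positivity)]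
      change a K i s ≤ A
      linarith
    · rw [← div_le_iff₀ (by positivity)]
      change b K i s ≤ A
      linarith
  have hmean : ∑ K, T K ≤ 2 * ℓ * (ℓ + 1) * G := by
    have h1 : ∀ i : Fin ℓ, ∀ s ∈ Finset.range (ℓ + 1), ∑ K, (a K i s + b K i s) ≤ 2 * G := by
      intro i s hs
      have hc := hC s (by simpa [Nat.lt_succ_iff] using hs)
      rw [Finset.sum_add_distrib]
      have h2 : ∑ K, a K i s ≤ G := by
        simp only [a]
        rw [← Finset.sum_div, ← Finset.sum_mul, div_le_iff₀ (by positivity), mul_comm (G : ℝ)]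
        exact sum_undecCount ℓ i s
      have h3 : ∑ K, b K i s ≤ G := by
        simp only [b]
        rw [← Finset.sum_div, ← Finset.sum_mul, div_le_iff₀ (by positivity), mul_comm (G : ℝ)]
        exact sum_decCount ℓ i s
      linarith
    simp only [T]
    rw [Finset.sum_comm]
    calc _ ≤ ∑ i : Fin ℓ, ∑ s ∈ Finset.range (ℓ + 1), 2 * (G : ℝ) := by
          refine Finset.sum_le_sum fun i _ => ?_
          rw [Finset.sum_comm]
          exact Finset.sum_le_sum (h1 i)
      _ = _ := by simp; ring
  have hmarkov : ((Finset.univ.filter fun K => ¬ P K).card : ℝ) * A ≤ ∑ K, T K := by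
    rw [← nsmul_eq_mul, ← Finset.sum_const]
    refine (Finset.sum_le_sum (g := T) fun K hK => ?_).trans
      (Finset.sum_le_sum_of_subset_of_nonneg (Finset.subset_univ _) fun K _ _ => hT0 K)
    by_contra hlt
    exact (Finset.mem_filter.1 hK).2 (hP K (hsharp K (not_le.1 hlt).le))
  have hsplit : ((Finset.univ.filter P).card : ℝ) +
      ((Finset.univ.filter fun K => ¬ P K).card : ℝ) = G := by
    rw [hG, ← Finset.card_univ]
    exact_mod_cast Finset.card_filter_add_card_filter_not P
  have hbad : ((Finset.univ.filter fun K => ¬ P K).card : ℝ) ≤ 2 / ℓ * G := by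
    have h4 := hmarkov.trans hmean
    have h5 : 2 * (ℓ : ℝ) * (ℓ + 1) * G = (2 / ℓ * G) * A := by
      rw [hA]; field_simp
    rw [h5] at h4
    exact le_of_mul_le_mul_right h4 hA0
  unfold fracGL
  rw [ge_iff_le, le_div_iff₀ hGpos]
  linarith

/-! ### Binomial averages of erasure profiles -/

lemma pow_sub_pow_le_mul (n : ℕ) (a c : ℝ) (ha : 1 ≤ a) (hc : 0 ≤ c) (hca : c ≤ a) :
    a ^ n - c ^ n ≤ n * (a - c) * a ^ n := by
  have h := (le_abs_self _).trans (abs_pow_sub_pow_le (a := a) (b := c) (n := n))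
  rw [abs_of_nonneg (by linarith : 0 ≤ a), abs_of_nonneg hc, max_eq_left hca,
    abs_of_nonneg (by linarith : 0 ≤ a - c)] at h
  refine h.trans ?_
  rw [mul_comm (a - c) (n : ℝ)]
  have : 0 ≤ a - c := by linarith
  gcongr
  omega

/-- Binomial averages of a profile `N` with `N s / C(ℓ, s) ≤ B y ^ s`. The second bound uses
`N 0 = 0` to gain the factor `ℓ z`. -/
lemma binom_sum_le (ℓ : ℕ) (N : ℕ → ℝ) (B y z : ℝ) (hB : 0 ≤ B) (hy : 1 ≤ y) (hz0 : 0 ≤ z)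
    (hz1 : z ≤ 1) (hN0 : N 0 = 0) (hN : ∀ s ≤ ℓ, N s ≤ ℓ.choose s * (B * y ^ s)) :
    ∑ s ∈ Finset.range (ℓ + 1), N s * (z ^ s * (1 - z) ^ (ℓ - s)) ≤
        B * (z * y + (1 - z)) ^ ℓ ∧
    ∑ s ∈ Finset.range (ℓ + 1), N s * (z ^ s * (1 - z) ^ (ℓ - s)) ≤
        B * (ℓ * (z * y) * (z * y + (1 - z)) ^ ℓ) := by
  have hz' : 0 ≤ 1 - z := by linarith
  have key : ∑ s ∈ Finset.range (ℓ + 1), N s * (z ^ s * (1 - z) ^ (ℓ - s)) ≤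
      B * ((z * y + (1 - z)) ^ ℓ - (1 - z) ^ ℓ) := by
    rw [add_pow, Finset.sum_range_succ', Finset.sum_range_succ', hN0]
    simp only [zero_mul, add_zero, pow_zero, Nat.sub_zero, Nat.choose_zero_right, Nat.cast_one,
      one_mul, mul_one, add_sub_cancel_right]
    rw [Finset.mul_sum]
    refine Finset.sum_le_sum fun s hs => ?_
    have h := hN (s + 1) (by have := Finset.mem_range.1 hs; omega)
    calc _ ≤ (ℓ.choose (s + 1) * (B * y ^ (s + 1))) *
          (z ^ (s + 1) * (1 - z) ^ (ℓ - (s + 1))) := by gcongr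
      _ = _ := by rw [mul_pow]; ring
  constructor
  · refine key.trans ?_
    gcongr
    linarith [pow_nonneg hz' ℓ]
  · refine key.trans ?_
    gcongr
    have h1 : 1 ≤ z * y + (1 - z) := by nlinarith
    have := pow_sub_pow_le_mul ℓ (z * y + (1 - z)) (1 - z) h1 hz' (by nlinarith)
    simpa using this

/-- With `r = √ℓ`, a profile below `exp (1 + (s - x) / r)` has a binomial average below a constant
times `exp ((ℓ z - x) / r)`; the choice of `r` keeps the second order term of the moment generating
function bounded. -/
lemma profile_bounds (ℓ : ℕ) (N : ℕ → ℝ) (r x z : ℝ) (hr : 1 ≤ r) (hrℓ : r ^ 2 = ℓ)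
    (hz0 : 0 ≤ z) (hz1 : z ≤ 1) (hN0 : N 0 = 0) (hN1 : ∀ s ≤ ℓ, N s ≤ ℓ.choose s)
    (hN : ∀ s ≤ ℓ, N s ≤ ℓ.choose s * Real.exp (1 + (s - x) / r)) :
    ∑ s ∈ Finset.range (ℓ + 1), N s * (z ^ s * (1 - z) ^ (ℓ - s)) ≤
        Real.exp 3 * Real.exp ((ℓ * z - x) / r) ∧
    ∑ s ∈ Finset.range (ℓ + 1), N s * (z ^ s * (1 - z) ^ (ℓ - s)) ≤
        Real.exp 3 * (ℓ * z) * Real.exp ((ℓ * z - x) / r) ∧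
    ∑ s ∈ Finset.range (ℓ + 1), N s * (z ^ s * (1 - z) ^ (ℓ - s)) ≤ ℓ * z := by
  have hr0 : 0 < r := by linarith
  have hinv : 0 ≤ 1 / r := by positivity
  have hinv1 : 1 / r ≤ 1 := by rw [div_le_one hr0]; exact hr
  have hb := binom_sum_le ℓ N (Real.exp (1 - x / r)) (Real.exp (1 / r)) z (Real.exp_nonneg _)
    (Real.one_le_exp hinv) hz0 hz1 hN0 (fun s hs => by
      refine (hN s hs).trans (le_of_eq ?_)
      rw [← Real.exp_nat_mul, ← Real.exp_add]
      congr 2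
      field_simp
      ring)
  have hmgf : (z * Real.exp (1 / r) + (1 - z)) ^ ℓ ≤ Real.exp (ℓ * z / r + 1) := by
    have h1 : Real.exp (1 / r) ≤ 1 + 1 / r + (1 / r) ^ 2 := by
      have := (abs_le.1 (Real.abs_exp_sub_one_sub_id_le (x := 1 / r)
        (by rw [abs_of_nonneg hinv]; exact hinv1))).2
      linarith
    have h2 : z * Real.exp (1 / r) + (1 - z) ≤ Real.exp (z * (1 / r + (1 / r) ^ 2)) := by
      refine le_trans ?_ (Real.add_one_le_exp _)
      nlinarith
    have h3 : 0 ≤ z * Real.exp (1 / r) + (1 - z) := by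
      have := mul_nonneg hz0 (Real.exp_nonneg (1 / r))
      linarith
    refine (pow_le_pow_left₀ h3 h2 ℓ).trans ?_
    rw [← Real.exp_nat_mul, Real.exp_le_exp, ← hrℓ]
    have : r ^ 2 * (z * (1 / r + (1 / r) ^ 2)) = r ^ 2 * z / r + z := by field_simp
    linarith
  refine ⟨hb.1.trans ?_, hb.2.trans ?_, ?_⟩
  · calc _ ≤ Real.exp (1 - x / r) * Real.exp (ℓ * z / r + 1) := by gcongr
      _ = Real.exp (2 + (ℓ * z - x) / r) := by rw [← Real.exp_add]; congr 1; ring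
      _ ≤ _ := by rw [← Real.exp_add, Real.exp_le_exp]; linarith
  · calc _ ≤ Real.exp (1 - x / r) * (ℓ * (z * Real.exp 1) * Real.exp (ℓ * z / r + 1)) := by
          gcongr
      _ = (ℓ * z) * (Real.exp (1 - x / r) * Real.exp 1 * Real.exp (ℓ * z / r + 1)) := by ring
      _ = (ℓ * z) * Real.exp (3 + (ℓ * z - x) / r) := by
          rw [← Real.exp_add, ← Real.exp_add]; congr 2; ring
      _ = _ := by rw [Real.exp_add]; ring
  · have := (binom_sum_le ℓ N 1 1 z zero_le_one le_rfl hz0 hz1 hN0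
      (fun s hs => by simpa using hN1 s hs)).2
    simpa using this

/-- If `ℓ z` lies below `x`, then `f` itself is exponentially small; otherwise `1 - f` is, and the
factor `ℓ z` is supplied by `f ≤ ℓ z` or is at least `1`. -/
lemma mul_one_sub_le_half (ℓ r x z f : ℝ) (hr : 1 ≤ r) (hz0 : 0 ≤ z) (hz : z ≤ 1 / 2)
    (hℓ : 0 ≤ ℓ) (hx : 0 ≤ x) (hf0 : 0 ≤ f) (hf1 : f ≤ 1)
    (h1 : f ≤ Real.exp 3 * (ℓ * z) * Real.exp ((ℓ * z - x) / r)) (h2 : f ≤ ℓ * z)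
    (h3 : 1 - f ≤ Real.exp 3 * Real.exp ((x - ℓ * z) / r)) :
    f * (1 - f) ≤ 2 * Real.exp 3 * ℓ * (z * (1 - z)) * Real.exp (-(|x - ℓ * z| / r)) := by
  have hr0 : 0 < r := by linarith
  have hz1 : 1 ≤ 2 * (1 - z) := by linarith
  have hℓz : 0 ≤ ℓ * z := by positivity
  suffices h : f * (1 - f) ≤ Real.exp 3 * (ℓ * z) * Real.exp (-(|x - ℓ * z| / r)) by
    refine h.trans ?_
    have : 0 ≤ Real.exp 3 * (ℓ * z) * Real.exp (-(|x - ℓ * z| / r)) := by positivity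
    nlinarith
  rcases le_total (ℓ * z) x with hc | hc
  · rw [abs_of_nonneg (by linarith), ← neg_div, neg_sub]
    nlinarith
  · rw [abs_of_nonpos (by linarith), neg_div, neg_neg]
    rcases le_total 1 (ℓ * z) with hd | hd
    · have : Real.exp 3 * Real.exp ((x - ℓ * z) / r) ≤
          Real.exp 3 * (ℓ * z) * Real.exp ((x - ℓ * z) / r) := by
        have : 0 ≤ Real.exp 3 * Real.exp ((x - ℓ * z) / r) := by positivity
        nlinarith
      nlinarith
    · have h4 : 1 ≤ Real.exp 3 * Real.exp ((x - ℓ * z) / r) := by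
        rw [← Real.exp_add]
        apply Real.one_le_exp
        have : -1 ≤ (x - ℓ * z) / r := by rw [le_div_iff₀ hr0]; linarith
        linarith
      nlinarith

/-- The variance-like quantity `f (1 - f)` decays exponentially in `|x - ℓ z| / √ℓ`, with the factor
`z (1 - z)` that makes the comparison with `g_α(z)` uniform up to the endpoints. -/
lemma mul_one_sub_le (ℓ : ℕ) (N : ℕ → ℝ) (r x z : ℝ) (hr : 1 ≤ r) (hrℓ : r ^ 2 = ℓ)
    (hz0 : 0 ≤ z) (hz1 : z ≤ 1) (hx0 : 0 ≤ x) (hx1 : x ≤ ℓ) (hN0 : N 0 = 0) (hNℓ : N ℓ = 1)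
    (hNnn : ∀ s ≤ ℓ, 0 ≤ N s) (hN1 : ∀ s ≤ ℓ, N s ≤ ℓ.choose s)
    (hN : ∀ s ≤ ℓ, N s ≤ ℓ.choose s * Real.exp (1 + (s - x) / r))
    (hM : ∀ s ≤ ℓ, ℓ.choose s - N s ≤ ℓ.choose s * Real.exp (1 + (x - s) / r))
    (f : ℝ) (hf : f = ∑ s ∈ Finset.range (ℓ + 1), N s * (z ^ s * (1 - z) ^ (ℓ - s))) :
    0 ≤ f ∧ f ≤ 1 ∧
    f * (1 - f) ≤ 2 * Real.exp 3 * ℓ * (z * (1 - z)) * Real.exp (-(|x - ℓ * z| / r)) := by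
  have hz' : 0 ≤ 1 - z := by linarith
  have hf' : 1 - f = ∑ s ∈ Finset.range (ℓ + 1), ((ℓ.choose (ℓ - s) : ℝ) - N (ℓ - s)) *
      ((1 - z) ^ s * (1 - (1 - z)) ^ (ℓ - s)) := by
    have h1 : (1 : ℝ) = ∑ s ∈ Finset.range (ℓ + 1), (ℓ.choose s : ℝ) *
        (z ^ s * (1 - z) ^ (ℓ - s)) := by
      have := add_pow z (1 - z) ℓ
      rw [add_sub_cancel, one_pow] at this
      exact this.trans (Finset.sum_congr rfl fun s _ => by ring)
    refine (congrArg (· - f) h1).trans ?_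
    simp only [hf]
    rw [← Finset.sum_sub_distrib, ← Finset.sum_range_reflect]
    refine Finset.sum_congr rfl fun s hs => ?_
    have hs' : s ≤ ℓ := by have := Finset.mem_range.1 hs; omega
    rw [show ℓ + 1 - 1 - s = ℓ - s by omega, show ℓ - (ℓ - s) = s by omega]
    ring
  have hb := profile_bounds ℓ N r x z hr hrℓ hz0 hz1 hN0 hN1 hN
  have hb' := profile_bounds ℓ (fun s => (ℓ.choose (ℓ - s) : ℝ) - N (ℓ - s)) r (ℓ - x) (1 - z)
    hr hrℓ hz' (by linarith) (by simp [hNℓ])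
    (fun s hs => by
      rw [Nat.choose_symm hs]
      linarith [hNnn (ℓ - s) (by omega)])
    (fun s hs => by
      refine (hM (ℓ - s) (by omega)).trans (le_of_eq ?_)
      rw [Nat.choose_symm hs, Nat.cast_sub hs]
      congr 3
      ring)
  rw [← hf] at hb
  rw [← hf'] at hb'
  have e1 : (ℓ : ℝ) * (1 - z) - (ℓ - x) = x - ℓ * z := by ring
  rw [e1] at hb'
  have hf0 : 0 ≤ f := by
    rw [hf]
    refine Finset.sum_nonneg fun s hs => ?_
    have := hNnn s (by have := Finset.mem_range.1 hs; omega)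
    positivity
  have hf1 : f ≤ 1 := by
    rw [← sub_nonneg, hf']
    refine Finset.sum_nonneg fun s hs => ?_
    have := hN1 (ℓ - s) (by omega)
    have : 0 ≤ (ℓ.choose (ℓ - s) : ℝ) - N (ℓ - s) := by linarith
    have : 0 ≤ 1 - (1 - z) := by linarith
    positivity
  refine ⟨hf0, hf1, ?_⟩
  rcases le_total z (1 / 2) with h | h
  · exact mul_one_sub_le_half ℓ r x z f hr hz0 h (by positivity) hx0 hf0 hf1 hb.2.1 hb.2.2 hb'.1
  · have := mul_one_sub_le_half ℓ r (ℓ - x) (1 - z) (1 - f) hr hz' (by linarith) (by positivity)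
      (by linarith) (by linarith) (by linarith) (by rw [e1]; exact hb'.2.1) hb'.2.2
      (by
        rw [show (ℓ : ℝ) - x - ℓ * (1 - z) = ℓ * z - x by ring, sub_sub_cancel]
        exact hb.1)
    rw [show (ℓ : ℝ) - x - ℓ * (1 - z) = -(x - ℓ * z) by ring, abs_neg] at this
    calc f * (1 - f) = (1 - f) * (1 - (1 - f)) := by ring
      _ ≤ _ := this
      _ = _ := by ring

/-- A fraction `q ≤ 1` with `q ≤ A 2 ^ (s - i)` also satisfies `q ≤ exp (1 + (s - i) / r)` once
`A ≤ 2 ^ r`. -/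
lemma frac_le_exp (q A r : ℝ) (i s : ℕ) (hr : 2 ≤ r) (hA : A ≤ (2 : ℝ) ^ r) (hq : q ≤ 1)
    (h : q * 2 ^ i ≤ A * 2 ^ s) : q ≤ Real.exp (1 + (s - i) / r) := by
  have hr0 : 0 < r := by linarith
  have e1 : 1 + ((s : ℝ) - i) / r = (r + s - i) / r := by field_simp; ring
  rw [e1]
  rcases le_total 0 (r + s - i) with hc | hc
  · exact hq.trans (Real.one_le_exp (by positivity))
  · have h1 : q ≤ (2 : ℝ) ^ (r + s - i) := by
      rw [Real.rpow_sub two_pos, Real.rpow_add two_pos, Real.rpow_natCast, Real.rpow_natCast,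
        le_div_iff₀ (by positivity)]
      refine h.trans ?_
      gcongr
    refine h1.trans ?_
    rw [Real.rpow_def_of_pos two_pos, Real.exp_le_exp, div_eq_mul_inv, mul_comm]
    have h2 : r⁻¹ ≤ Real.log 2 := by
      have : r⁻¹ ≤ 2⁻¹ := inv_anti₀ two_pos hr
      linarith [Real.log_two_gt_d9]
    nlinarith

/-- A two-sided geometric sum. -/
lemma sum_exp_abs_le (ℓ : ℕ) (c x : ℝ) (hc : 0 < c) (hc1 : c ≤ 1) (hx : 0 ≤ x) :
    ∑ i ∈ Finset.range ℓ, Real.exp (-(c * |(i : ℝ) - x|)) ≤ 4 / c := by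
  set q := Real.exp (-c) with hq
  have hq0 : 0 < q := Real.exp_pos _
  have hq1 : q < 1 := by rw [hq, Real.exp_lt_one_iff]; linarith
  have hgeo : ∀ n : ℕ, ∑ k ∈ Finset.range n, q ^ k ≤ 2 / c := by
    intro n
    have h1 : ∑ k ∈ Finset.range n, q ^ k ≤ (1 - q)⁻¹ := by
      rw [← tsum_geometric_of_lt_one hq0.le hq1]
      exact (summable_geometric_of_lt_one hq0.le hq1).sum_le_tsum _ fun k _ => by positivity
    refine h1.trans ?_
    have h2 : q * (1 + c) ≤ 1 := by
      have h3 : 1 + c ≤ Real.exp c := by linarith [Real.add_one_le_exp c]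
      calc q * (1 + c) ≤ q * Real.exp c := by gcongr
        _ = 1 := by rw [hq, ← Real.exp_add]; simp
    rw [inv_eq_one_div, div_le_div_iff₀ (by linarith) hc]
    nlinarith
  set n := ⌊x⌋₊ with hn
  have hnx : (n : ℝ) ≤ x := Nat.floor_le hx
  have hxn : x < n + 1 := Nat.lt_floor_add_one x
  have hpt : ∀ i : ℕ, Real.exp (-(c * |(i : ℝ) - x|)) ≤
      if i < n + 1 then q ^ (n - i) else q ^ (i - (n + 1)) := by
    intro i
    split_ifs with h
    · have hi : i ≤ n := by omega
      rw [hq, ← Real.exp_nat_mul, Real.exp_le_exp, Nat.cast_sub hi]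
      have : x - i ≤ |(i : ℝ) - x| := by rw [abs_sub_comm]; exact le_abs_self _
      nlinarith
    · have hi : n + 1 ≤ i := by omega
      rw [hq, ← Real.exp_nat_mul, Real.exp_le_exp, Nat.cast_sub hi]
      push_cast
      have : i - x ≤ |(i : ℝ) - x| := le_abs_self _
      nlinarith
  calc _ ≤ ∑ i ∈ Finset.range ((n + 1) + ℓ), Real.exp (-(c * |(i : ℝ) - x|)) := by
        refine Finset.sum_le_sum_of_subset_of_nonneg ?_ fun _ _ _ => (Real.exp_pos _).le
        exact Finset.range_mono (by omega)
    _ ≤ ∑ i ∈ Finset.range ((n + 1) + ℓ),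
          if i < n + 1 then q ^ (n - i) else q ^ (i - (n + 1)) :=
        Finset.sum_le_sum fun i _ => hpt i
    _ = ∑ k ∈ Finset.range (n + 1), q ^ k + ∑ k ∈ Finset.range ℓ, q ^ k := by
        rw [Finset.sum_range_add, ← Finset.sum_range_reflect (fun k => q ^ k) (n + 1)]
        congr 1
        · refine Finset.sum_congr rfl fun i hi => ?_
          rw [if_pos (Finset.mem_range.1 hi)]
          congr 1
        · refine Finset.sum_congr rfl fun i hi => ?_
          rw [if_neg (by omega)]
          congr 1
          omega
    _ ≤ 2 / c + 2 / c := add_le_add (hgeo _) (hgeo _)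
    _ = 4 / c := by ring

/-! ### The bound on the supremum of the contraction ratio -/

/-- The size hypothesis in usable form: `L = log₂ ℓ` satisfies `2 ≤ L`, `1 / α ≤ L` and
`L ≤ ℓ ^ α`. -/
lemma size_bounds (α : ℝ) (hα : α ∈ Set.Ioo (0 : ℝ) (1 / 16)) (ℓ : ℕ) (hℓ : 2 ≤ ℓ)
    (hcond : Real.logb 2 ℓ / Real.logb 2 (Real.logb 2 ℓ) ≥ 1 / α) :
    2 ≤ Real.logb 2 ℓ ∧ 1 / α ≤ Real.logb 2 ℓ ∧ Real.logb 2 ℓ ≤ (ℓ : ℝ) ^ α := by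
  obtain ⟨hα0, hα1⟩ := hα
  have hℓ0 : (0 : ℝ) < ℓ := by exact_mod_cast (by omega : 0 < ℓ)
  set L := Real.logb 2 ℓ with hL
  have hLpow : (2 : ℝ) ^ L = ℓ := Real.rpow_logb two_pos (by norm_num) hℓ0
  have hinv : 16 < 1 / α := by rw [lt_div_iff₀ hα0]; linarith
  have hL1 : 1 ≤ L := by
    rw [hL, Real.le_logb_iff_rpow_le one_lt_two hℓ0, Real.rpow_one]
    exact_mod_cast hℓ
  have hll0 : 0 < Real.logb 2 L := by
    have h0 : 0 ≤ Real.logb 2 L := Real.logb_nonneg one_lt_two hL1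
    rcases h0.eq_or_lt with h | h
    · rw [← h, div_zero] at hcond; linarith
    · exact h
  have hmul : 1 / α * Real.logb 2 L ≤ L := by
    rwa [ge_iff_le, le_div_iff₀ hll0] at hcond
  have hL2 : 2 ≤ L := by
    by_contra hlt
    push Not at hlt
    have h4 : ℓ < 4 := by
      have : (ℓ : ℝ) < 4 := by
        rw [← hLpow]
        calc (2 : ℝ) ^ L < (2 : ℝ) ^ (2 : ℝ) := Real.rpow_lt_rpow_of_exponent_lt one_lt_two hlt
          _ = 4 := by norm_num
      exact_mod_cast this
    have h3 : ℓ = 3 := by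
      by_contra hne
      have h2 : ℓ = 2 := by omega
      have : L = 1 := by rw [hL, h2]; exact_mod_cast Real.logb_self_eq_one one_lt_two
      rw [this] at hll0
      simp at hll0
    -- `log₂ 3 ≥ 3/2` because `2 ^ 3 ≤ 3 ^ 2`, and `log₂ (3/2) ≥ 1/2` because `2 ≤ (3/2) ^ 2`.
    have hL32 : 3 / 2 ≤ L := by
      have : Real.logb 2 ((2 : ℝ) ^ 3) ≤ Real.logb 2 ((ℓ : ℝ) ^ 2) := by
        apply Real.logb_le_logb_of_le one_lt_two (by norm_num)
        rw [h3]; norm_num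
      rw [Real.logb_pow, Real.logb_pow, Real.logb_self_eq_one one_lt_two, ← hL] at this
      norm_num at this
      linarith
    have hll : 1 / 2 ≤ Real.logb 2 L := by
      have : Real.logb 2 2 ≤ Real.logb 2 (L ^ 2) := by
        apply Real.logb_le_logb_of_le one_lt_two (by norm_num)
        nlinarith
      rw [Real.logb_pow, Real.logb_self_eq_one one_lt_two] at this
      norm_num at this
      linarith
    nlinarith
  have hll1 : 1 ≤ Real.logb 2 L := by
    rw [Real.le_logb_iff_rpow_le one_lt_two (by linarith), Real.rpow_one]
    exact hL2
  refine ⟨hL2, ?_, ?_⟩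
  · nlinarith
  · have h1 : Real.logb 2 L ≤ L * α := by
      rw [one_div, inv_mul_le_iff₀ hα0] at hmul
      linarith
    calc L = (2 : ℝ) ^ Real.logb 2 L := (Real.rpow_logb two_pos (by norm_num) (by linarith)).symm
      _ ≤ (2 : ℝ) ^ (L * α) := Real.rpow_le_rpow_of_exponent_le one_le_two h1
      _ = (ℓ : ℝ) ^ α := by rw [Real.rpow_mul two_pos.le, hLpow]

/-- For a sharp kernel, `f_{K,i}` is exponentially close to `0` or to `1` once the index `i` is far
from `ℓ z` on the scale `r = √ℓ`. -/
lemma fK_bounds (ℓ : ℕ) (r z A : ℝ) (hr : 2 ≤ r) (hr2 : r ^ 2 = ℓ) (hA : A ≤ (2 : ℝ) ^ r)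
    (K : Matrix.GeneralLinearGroup (Fin ℓ) (ZMod 2)) (hK : Sharp ℓ A K)
    (hz0 : 0 ≤ z) (hz1 : z ≤ 1) (i : Fin ℓ) :
    0 ≤ fK ℓ K i z ∧ fK ℓ K i z ≤ 1 ∧
    fK ℓ K i z * (1 - fK ℓ K i z) ≤
      2 * Real.exp 3 * ℓ * (z * (1 - z)) * Real.exp (-(|((i : ℕ) : ℝ) - ℓ * z| / r)) := by
  obtain ⟨N, hN⟩ : ∃ N : ℕ → ℝ, ∀ s, N s = (undecCount ℓ K i s : ℝ) := ⟨_, fun _ => rfl⟩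
  have hpos : ∀ s ≤ ℓ, (0 : ℝ) < ℓ.choose s := fun s hs => by
    exact_mod_cast Nat.choose_pos hs
  have h0 : N 0 = 0 := by rw [hN, undecCount_zero]; norm_num
  have h1 : N ℓ = 1 := by rw [hN, undecCount_self]; norm_num
  have hnn : ∀ s ≤ ℓ, 0 ≤ N s := fun s _ => by rw [hN]; exact Nat.cast_nonneg _
  have hle : ∀ s ≤ ℓ, N s ≤ ℓ.choose s := fun s _ => by
    rw [hN]; exact_mod_cast undecCount_le ℓ _ i s
  have hup : ∀ s ≤ ℓ, N s ≤ ℓ.choose s * Real.exp (1 + ((s : ℝ) - ((i : ℕ) : ℝ)) / r) := by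
    intro s hs
    have hc := hpos s hs
    have hKs := (hK i s hs).1
    rw [← hN] at hKs
    rw [mul_comm, ← div_le_iff₀ hc]
    refine frac_le_exp _ A r i s hr hA (by rw [div_le_one hc]; exact hle s hs) ?_
    rw [div_mul_eq_mul_div, div_le_iff₀ hc]
    linarith
  have hdown : ∀ s ≤ ℓ,
      ℓ.choose s - N s ≤ ℓ.choose s * Real.exp (1 + (((i : ℕ) : ℝ) - (s : ℝ)) / r) := by
    intro s hs
    have hc := hpos s hs
    have hKs := (hK i s hs).2
    rw [← hN] at hKs
    rw [mul_comm, ← div_le_iff₀ hc]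
    have hns := hnn s hs
    refine frac_le_exp _ A r s i hr hA (by rw [div_le_one hc]; linarith) ?_
    rw [div_mul_eq_mul_div, div_le_iff₀ hc]
    linarith
  have hf : fK ℓ K i z = ∑ s ∈ Finset.range (ℓ + 1), N s * (z ^ s * (1 - z) ^ (ℓ - s)) := by
    rw [fK_eq]
    exact Finset.sum_congr rfl fun s _ => by rw [hN]
  exact mul_one_sub_le ℓ N r ((i : ℕ) : ℝ) z (by linarith) hr2 hz0 hz1 (Nat.cast_nonneg _)
    (Nat.cast_le.2 i.2.le) h0 h1 hnn hle hup hdown _ hf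

/-- Sharp kernels have a small `λ*`. Here `ℓ ^ α ≥ log₂ ℓ ≥ 1 / α` absorbs the length
`√ℓ / α` of the window of indices that matter as well as all constants. -/
lemma lamStar_le_of_sharp (α : ℝ) (hα : α ∈ Set.Ioo (0 : ℝ) (1 / 16)) (ℓ : ℕ) (hℓ : 2 ≤ ℓ)
    (hcond : Real.logb 2 ℓ / Real.logb 2 (Real.logb 2 ℓ) ≥ 1 / α)
    (K : Matrix.GeneralLinearGroup (Fin ℓ) (ZMod 2))
    (hK : Sharp ℓ ((ℓ : ℝ) ^ 2 * (ℓ + 1)) K) :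
    lamStar ℓ (K : Matrix (Fin ℓ) (Fin ℓ) (ZMod 2)) α ≤ (ℓ : ℝ) ^ (-(1 : ℝ) / 2 + 5 * α) := by
  obtain ⟨hL2, hαL, hLα⟩ := size_bounds α hα ℓ hℓ hcond
  obtain ⟨hα0, hα1⟩ := hα
  have hℓ2 : (2 : ℝ) ≤ ℓ := by exact_mod_cast hℓ
  have hℓ0 : (0 : ℝ) < ℓ := by linarith
  set L := Real.logb 2 ℓ with hL
  have hLpow : (2 : ℝ) ^ L = ℓ := Real.rpow_logb two_pos (by norm_num) hℓ0
  set r := Real.sqrt ℓ with hr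
  have hr2 : r ^ 2 = ℓ := Real.sq_sqrt hℓ0.le
  -- `√ℓ ≥ (ℓ ^ α) ^ 8 ≥ L ^ 8 ≥ 4 L`, since `8 α ≤ 1 / 2`.
  have hrL : 4 * L ≤ r := by
    have h1 : L ^ 8 ≤ r := by
      calc L ^ 8 ≤ ((ℓ : ℝ) ^ α) ^ 8 := by gcongr
        _ = (ℓ : ℝ) ^ (α * 8) := by rw [Real.rpow_mul hℓ0.le]; norm_cast
        _ ≤ (ℓ : ℝ) ^ (1 / 2 : ℝ) :=
          Real.rpow_le_rpow_of_exponent_le (by linarith) (by linarith)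
        _ = r := by rw [hr, Real.sqrt_eq_rpow]
    have h2 : (2 : ℝ) ^ 7 ≤ L ^ 7 := by gcongr
    have : L ^ 8 = L ^ 7 * L := by ring
    nlinarith
  have hr2' : 2 ≤ r := by linarith
  have hr0 : 0 < r := by linarith
  have hA : (ℓ : ℝ) ^ 2 * (ℓ + 1) ≤ (2 : ℝ) ^ r := by
    calc (ℓ : ℝ) ^ 2 * (ℓ + 1) ≤ (ℓ : ℝ) ^ 2 * (ℓ : ℝ) ^ 2 := by gcongr; nlinarith
      _ = (ℓ : ℝ) ^ 4 := by ring
      _ = (2 : ℝ) ^ (L * 4) := by rw [Real.rpow_mul two_pos.le, hLpow]; norm_cast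
      _ ≤ _ := Real.rpow_le_rpow_of_exponent_le one_le_two (by linarith)
  have hmain : ∀ z ∈ Set.Ioo (0 : ℝ) 1, ∀ i : Fin ℓ,
      gfun α (fK ℓ K i z) ≤
        (2 * Real.exp 3 * ℓ) ^ α * gfun α z * Real.exp (-(α / r * |((i : ℕ) : ℝ) - ℓ * z|)) := by
    intro z hz i
    have hz' : 0 ≤ 1 - z := by linarith [hz.2]
    obtain ⟨hf0, hf1, hf⟩ := fK_bounds ℓ r z _ hr2' hr2 hA K hK hz.1.le hz.2.le i
    have hf1' : 0 ≤ 1 - fK ℓ K i z := by linarith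
    unfold gfun
    rw [← Real.mul_rpow hf0 hf1', ← Real.mul_rpow hz.1.le hz']
    have hzz : 0 ≤ z * (1 - z) := mul_nonneg hz.1.le hz'
    refine (Real.rpow_le_rpow (mul_nonneg hf0 hf1') hf hα0.le).trans (le_of_eq ?_)
    rw [Real.mul_rpow (by positivity) (Real.exp_nonneg _), Real.mul_rpow (by positivity) hzz,
      ← Real.exp_mul]
    congr 2
    ring
  unfold lamStar
  refine csSup_le ((Set.nonempty_Ioo.2 one_pos).image _) ?_
  rintro _ ⟨z, hz, rfl⟩
  have hg : 0 < gfun α z := by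
    unfold gfun
    have := hz.1
    have : 0 < 1 - z := by linarith [hz.2]
    positivity
  unfold lam
  rw [div_le_iff₀ hg]
  have hc0 : 0 < α / r := by positivity
  have hc1 : α / r ≤ 1 := by rw [div_le_one hr0]; linarith
  have hsum : ∑ i : Fin ℓ, gfun α (fK ℓ K i z) ≤
      (2 * Real.exp 3 * ℓ) ^ α * gfun α z * (4 / (α / r)) := by
    refine (Finset.sum_le_sum fun i _ => hmain z hz i).trans ?_
    rw [← Finset.mul_sum,
      Fin.sum_univ_eq_sum_range (fun i => Real.exp (-(α / r * |(i : ℝ) - ℓ * z|))) ℓ]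
    gcongr
    exact sum_exp_abs_le ℓ (α / r) (ℓ * z) hc0 hc1 (mul_nonneg hℓ0.le hz.1.le)
  have hconst : (2 * Real.exp 3 * ℓ) ^ α ≤ 2 * (ℓ : ℝ) ^ α := by
    rw [Real.mul_rpow (by positivity) hℓ0.le]
    gcongr
    have h1 : 2 * Real.exp 3 ≤ (2 : ℝ) ^ (16 : ℝ) := by
      have h2 : Real.exp 3 = Real.exp 1 ^ 3 := by rw [← Real.exp_nat_mul]; norm_num
      have h3 : Real.exp 1 ^ 3 ≤ 3 ^ 3 := by
        have := Real.exp_one_lt_d9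
        gcongr
        linarith
      rw [h2]
      norm_num at h3 ⊢
      linarith
    calc (2 * Real.exp 3) ^ α ≤ ((2 : ℝ) ^ (16 : ℝ)) ^ α := by gcongr
      _ = (2 : ℝ) ^ (16 * α) := by rw [← Real.rpow_mul two_pos.le]
      _ ≤ (2 : ℝ) ^ (1 : ℝ) := Real.rpow_le_rpow_of_exponent_le one_le_two (by linarith)
      _ = 2 := Real.rpow_one 2
  set X := (ℓ : ℝ) ^ α with hX
  have hX2 : 2 ≤ X := hL2.trans hLα
  have hpow : (ℓ : ℝ) ^ (-(1 : ℝ) / 2 + 5 * α) = r / ℓ * X ^ 5 := by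
    rw [Real.rpow_add hℓ0, mul_comm 5 α, Real.rpow_mul hℓ0.le, ← hX]
    congr 1
    · rw [neg_div, Real.rpow_neg hℓ0.le, ← Real.sqrt_eq_rpow, ← hr, ← hr2]
      field_simp
    · norm_cast
  rw [hpow]
  calc 1 / (ℓ : ℝ) * ∑ i : Fin ℓ, gfun α (fK ℓ K i z)
      ≤ 1 / ℓ * (2 * X * gfun α z * (4 * r * X)) := by
        gcongr
        refine hsum.trans ?_
        have h5 : 4 / (α / r) = 4 * r * (1 / α) := by field_simp
        rw [h5]
        gcongr
        exact hαL.trans hLα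
    _ = r / ℓ * (8 * X ^ 2) * gfun α z := by ring
    _ ≤ r / ℓ * X ^ 5 * gfun α z := by
        gcongr
        have : (2 : ℝ) ^ 3 ≤ X ^ 3 := by gcongr
        nlinarith [sq_nonneg X]

theorem stmt5 (α : ℝ) (hα : α ∈ Set.Ioo (0 : ℝ) (1 / 16)) (ℓ : ℕ) (hℓ : 2 ≤ ℓ)
    (hcond : Real.logb 2 ℓ / Real.logb 2 (Real.logb 2 ℓ) ≥ 1 / α) :
    fracGL ℓ (fun K =>
        lamStar ℓ (K : Matrix (Fin ℓ) (Fin ℓ) (ZMod 2)) α ≤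
          (ℓ : ℝ) ^ (-(1 : ℝ) / 2 + 5 * α)) ≥
      1 - 2 / (ℓ : ℝ) :=
  fracGL_sharp ℓ hℓ _ (lamStar_le_of_sharp α hα ℓ hℓ hcond)

end
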